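/- arXiv:1209.3832 — 3 statements merged into one kernel-verified Lean document; each statement's English description precedes it below -/
import Mathlib

section
/- Let g be a finite-dimensional simple Lie algebra over ℂ with a ℤ/nℤ-grading g = ⊕_{i ∈ ℤ/nℤ} g_i, and let h_0 be a Cartan subalgebra of the grade-zero subalgebra g_0. Fix j ∈ ℤ/nℤ with j ≠ 0, regard g_j as an h_0-module via the adjoint action, and let μ : h_0 → ℂ be a nonzero weight of this module, i.e., μ ≠ 0 and the weight space g_j^{(μ)} = {x ∈ g_j | [t, x] = μ(t)·x for all t ∈ h_0} is nonzero. Then g_j^{(μ)} is one-dimensional. -/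
open LieAlgebra LieModule

/-- **Jacobson's lemma**, for a nilpotent left factor: if `x` is nilpotent and commutes with
`x * y - y * x`, then `x * y - y * x` is nilpotent. -/
lemma isNilpotent_commutator_of_commute {A : Type*} [Ring A] [IsAddTorsionFree A] {x y z : A}
    (hz : x * y - y * x = z) (hxz : Commute x z) (hx : IsNilpotent x) : IsNilpotent z := by
  have key (k : ℕ) : x ^ (k + 1) * y - y * x ^ (k + 1) = (k + 1) • (x ^ k * z) := by
    induction k with
    | zero => simpa using hz
    | succ k ih =>
      calc x ^ (k + 1 + 1) * y - y * x ^ (k + 1 + 1)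
          = x * (x ^ (k + 1) * y - y * x ^ (k + 1)) + (x * y - y * x) * x ^ (k + 1) := by
            rw [pow_succ' x (k + 1)]; noncomm_ring
        _ = (k + 1 + 1) • (x ^ (k + 1) * z) := by
            rw [ih, hz, ← (hxz.pow_left (k + 1)).eq, mul_smul_comm, ← mul_assoc, ← pow_succ',
              succ_nsmul _ (k + 1)]
  have descend (k : ℕ) : ∀ a : ℕ, x ^ k * z ^ a = 0 → IsNilpotent z := by
    induction k with
    | zero => exact fun a ha ↦ ⟨a, by simpa using ha⟩
    | succ k ih =>
      intro a ha
      refine ih (a + 1 + a) ?_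
      have ha' : z ^ a * x ^ (k + 1) = 0 := by rw [← (hxz.pow_pow (k + 1) a).eq, ha]
      have h : (k + 1) • (x ^ k * z ^ (a + 1 + a)) = 0 := by
        calc (k + 1) • (x ^ k * z ^ (a + 1 + a))
            = z ^ a * ((k + 1) • (x ^ k * z)) * z ^ a := by
              rw [mul_smul_comm, smul_mul_assoc, ← mul_assoc, ← (hxz.pow_pow k a).eq]
              congr 1
              simp only [pow_add, pow_one, mul_assoc]
          _ = z ^ a * x ^ (k + 1) * y * z ^ a - z ^ a * y * (x ^ (k + 1) * z ^ a) := by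
              rw [← key]; noncomm_ring
          _ = 0 := by rw [ha, ha']; simp
      exact (smul_eq_zero_iff_right k.succ_ne_zero).mp h
  obtain ⟨m, hm⟩ := hx
  exact descend m 0 (by simp [hm])

namespace LieAlgebra

lemma commute_ad_of_lie_eq_zero {R L : Type*} [CommRing R] [LieRing L] [LieAlgebra R L] {x y : L}
    (h : ⁅x, y⁆ = 0) : Commute (ad R L x) (ad R L y) := by
  ext z
  simp [leibniz_lie x y z, h]

section Ring

variable {R L ι : Type*} [CommRing R] [IsDomain R] [IsPrincipalIdealRing R]
  [LieRing L] [LieAlgebra R L] [Module.Free R L] [Module.Finite R L]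
  [DecidableEq ι] [AddCommGroup ι] {V : ι → Submodule R L}

/-- Homogeneous elements of a graded Lie algebra are orthogonal for the Killing form unless their
degrees add to zero. -/
lemma killingForm_apply_eq_zero_of_graded (hV : DirectSum.IsInternal V)
    (hVlie : ∀ i j, ∀ x ∈ V i, ∀ y ∈ V j, ⁅x, y⁆ ∈ V (i + j)) {i j : ι} (hij : i + j ≠ 0)
    {x y : L} (hx : x ∈ V i) (hy : y ∈ V j) : killingForm R L x y = 0 := by
  refine LinearMap.trace_eq_zero_of_mapsTo_ne hV (fun k ↦ i + (j + k)) (fun k hk ↦ hij ?_)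
    (fun k z hz ↦ hVlie _ _ _ hx _ (hVlie _ _ _ hy _ hz))
  rwa [← add_assoc, add_eq_right] at hk

/-- A homogeneous element of a graded Lie algebra with nondegenerate Killing form is zero if it is
orthogonal to the component of opposite degree. -/
lemma IsKilling.eq_zero_of_forall_graded [IsKilling R L] (hV : DirectSum.IsInternal V)
    (hVlie : ∀ i j, ∀ x ∈ V i, ∀ y ∈ V j, ⁅x, y⁆ ∈ V (i + j)) {i : ι}
    {x : L} (hx : x ∈ V i) (h : ∀ y ∈ V (-i), killingForm R L x y = 0) : x = 0 := by
  refine (IsKilling.killingForm_nondegenerate R L).1 x fun y ↦ ?_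
  have hy : y ∈ ⨆ k, V k := by simp [hV.submodule_iSup_eq_top]
  induction hy using Submodule.iSup_induction' with
  | mem k y hy =>
    by_cases hk : i + k = 0
    · exact h y (by rwa [← eq_neg_of_add_eq_zero_right hk])
    · exact killingForm_apply_eq_zero_of_graded hV hVlie hk hx hy
  | zero => simp
  | add y z _ _ hy hz => simp [hy, hz]

end Ring

section Field

variable {K L ι : Type*} [Field K] [LieRing L] [LieAlgebra K L] [FiniteDimensional K L]
  (H : LieSubalgebra K L) [LieRing.IsNilpotent H] [IsTriangularizable K H L]

/-- The generalized root spaces of a nilpotent subalgebra are orthogonal for the Killing form unless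
the roots add to zero. -/
lemma killingForm_apply_eq_zero_of_mem_rootSpace_of_isNilpotent {α β : H → K} {x y : L}
    (hx : x ∈ rootSpace H α) (hy : y ∈ rootSpace H β) (hαβ : α + β ≠ 0) :
    killingForm K L x y = 0 := by
  classical
  refine LinearMap.trace_eq_zero_of_mapsTo_ne
    (DirectSum.isInternal_submodule_of_iSupIndep_of_iSup_eq_top
      (LieSubmodule.iSupIndep_toSubmodule.mpr <| iSupIndep_genWeightSpace K H L)
      (LieSubmodule.iSup_toSubmodule_eq_top.mpr <| iSup_genWeightSpace_eq_top K H L))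
    (fun γ ↦ α + (β + γ)) (fun γ ↦ by simpa only [← add_assoc] using add_ne_right.mpr hαβ)
    (fun γ ↦ (mapsTo_toEnd_genWeightSpace_add_of_mem_rootSpace K L H L α (β + γ) hx).comp <|
      mapsTo_toEnd_genWeightSpace_add_of_mem_rootSpace K L H L β γ hy)

variable [DecidableEq ι] [AddCommGroup ι] {V : ι → Submodule K L} {H}

/-- The Killing form pairs the homogeneous generalized root spaces `V i ∩ L^χ` and
`V (-i) ∩ L^(-χ)` nondegenerately, for a nilpotent subalgebra in degree zero. -/
lemma IsKilling.exists_killingForm_ne_zero_of_graded [IsKilling K L] (hV : DirectSum.IsInternal V)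
    (hVlie : ∀ i j, ∀ x ∈ V i, ∀ y ∈ V j, ⁅x, y⁆ ∈ V (i + j)) (hH : H.toSubmodule ≤ V 0)
    {i : ι} {χ : H → K} {x : L} (hx : x ∈ V i) (hxχ : x ∈ rootSpace H χ) (hx0 : x ≠ 0) :
    ∃ y ∈ V (-i), y ∈ rootSpace H (-χ) ∧ killingForm K L x y ≠ 0 := by
  contrapose! hx0
  refine IsKilling.eq_zero_of_forall_graded hV hVlie hx fun y hy ↦ ?_
  let N : LieSubmodule K H L :=
    { V (-i) with lie_mem := fun {t m} hm ↦ by simpa using hVlie 0 (-i) t (hH t.2) m hm }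
  have hyN : y ∈ ⨆ ψ : Weight K H L, N ⊓ genWeightSpace L ψ := by
    rw [← eq_iSup_inf_genWeightSpace]; exact hy
  clear hy
  induction hyN using LieSubmodule.iSup_induction' with
  | mem ψ y hy =>
    by_cases hψ : χ + ψ = 0
    · exact hx0 y hy.1 (by rw [← eq_neg_of_add_eq_zero_right hψ]; exact hy.2)
    · exact killingForm_apply_eq_zero_of_mem_rootSpace_of_isNilpotent H hxχ hy.2 hψ
  | zero => simp
  | add y z _ _ hy hz => simp [hy, hz]

end Field

end LieAlgebra

/-- In a finite-dimensional space an operator has no infinite sequence of eigenvectors whose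
eigenvalues form a nonconstant arithmetic progression. -/
lemma Module.End.exists_eq_zero_of_apply_eq_smul {K M : Type*} [Field K] [CharZero K]
    [AddCommGroup M] [Module K M] [FiniteDimensional K M] (f : Module.End K M) {c : K} (hc : c ≠ 0)
    (v : ℕ → M) (hv : ∀ k : ℕ, f (v k) = ((k + 1) * c) • v k) : ∃ k, v k = 0 := by
  by_contra! h
  have hli : LinearIndependent K v :=
    f.eigenvectors_linearIndependent' (fun k : ℕ ↦ (k + 1) * c)
      (fun a b hab ↦ by simpa [hc] using hab) v
      (fun k ↦ ⟨Module.End.mem_eigenspace_iff.mpr (hv k), h k⟩)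
  exact (hli.lt_aleph0_of_finiteDimensional).ne (by simp)

namespace LieAlgebra

/-- A vector `z` killed by `y` and having the same nonzero weight as `x` for the bracket `⁅x, y⁆`
is zero. -/
lemma eq_zero_of_lie_eq_zero_of_lie_lie_eq_smul {K L M : Type*} [Field K] [CharZero K]
    [LieRing L] [LieAlgebra K L] [AddCommGroup M] [Module K M] [FiniteDimensional K M]
    [LieRingModule L M] [LieModule K L M] {x y : L} {z : M} {c : K} (hc : c ≠ 0)
    (hx : ⁅⁅x, y⁆, x⁆ = c • x) (hz : ⁅⁅x, y⁆, z⁆ = c • z) (hyz : ⁅y, z⁆ = 0) : z = 0 := by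
  let v (k : ℕ) : M := ((toEnd K L M x) ^ k) z
  have hv_succ (k : ℕ) : v (k + 1) = ⁅x, v k⁆ := by simp [v, pow_succ']
  have hv (k : ℕ) : ⁅⁅x, y⁆, v k⁆ = ((k + 1) * c) • v k := by
    induction k with
    | zero => simpa [v] using hz
    | succ k ih =>
      rw [hv_succ, leibniz_lie, hx, ih, smul_lie, lie_smul, ← add_smul]
      push_cast
      ring_nf
  have hyv (k : ℕ) : ⁅y, v (k + 1)⁆ = (-((k + 1) * (k + 2) / 2 * c)) • v k := by
    induction k with
    | zero =>
      have : ⁅y, v 0⁆ = 0 := by simpa [v] using hyz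
      rw [hv_succ, leibniz_lie, this, ← lie_skew, neg_lie, hv]
      simp
    | succ k ih =>
      rw [hv_succ, leibniz_lie, ih, ← lie_skew, neg_lie, hv, lie_smul, ← hv_succ, ← neg_smul,
        ← add_smul]
      push_cast
      ring_nf
  obtain ⟨k, hk⟩ := (toEnd K L M ⁅x, y⁆).exists_eq_zero_of_apply_eq_smul hc v hv
  induction k with
  | zero => simpa [v] using hk
  | succ k ih =>
    refine ih ?_
    have h := hyv k
    rw [hk, lie_zero, eq_comm, smul_eq_zero] at h
    refine h.resolve_left ?_
    have h1 : (k : K) + 1 ≠ 0 := by exact_mod_cast k.succ_ne_zero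
    have h2 : (k : K) + 2 ≠ 0 := by exact_mod_cast (k + 1).succ_ne_zero
    simp [hc, h1, h2]

section Graded

variable {K L ι : Type*} [Field K] [LieRing L] [LieAlgebra K L]
  [FiniteDimensional K L] [IsKilling K L] {H : LieSubalgebra K L} [LieRing.IsNilpotent H]
  [IsTriangularizable K H L] [DecidableEq ι] [AddCommGroup ι] {V : ι → Submodule K L}

/-- A nilpotent subalgebra which is its own generalized zero root space in degree zero is
abelian. -/
lemma IsKilling.isLieAbelian_of_graded (hV : DirectSum.IsInternal V)
    (hVlie : ∀ i j, ∀ x ∈ V i, ∀ y ∈ V j, ⁅x, y⁆ ∈ V (i + j)) (hH : H.toSubmodule ≤ V 0)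
    (hH0 : ∀ x ∈ V 0, x ∈ rootSpace H 0 → x ∈ H) : IsLieAbelian H := by
  refine LieModule.isLieAbelian_of_ker_traceForm_eq_bot K H L ((Submodule.eq_bot_iff _).mpr ?_)
  intro x hx
  by_contra hx0
  obtain ⟨y, hy, hy0, hxy⟩ := IsKilling.exists_killingForm_ne_zero_of_graded hV hVlie hH
    (hH x.2) (le_zeroRootSubalgebra K L H x.2) (by simpa using hx0)
  rw [neg_zero] at hy hy0
  exact hxy (LinearMap.congr_fun hx (⟨y, hH0 y hy hy0⟩ : H))

/-- The homogeneous weight vectors of a given nonzero weight are proportional. -/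
lemma IsKilling.exists_smul_eq_of_graded [CharZero K] (hV : DirectSum.IsInternal V)
    (hVlie : ∀ i j, ∀ x ∈ V i, ∀ y ∈ V j, ⁅x, y⁆ ∈ V (i + j)) (hH : H.toSubmodule ≤ V 0)
    (hH0 : ∀ x ∈ V 0, x ∈ rootSpace H 0 → x ∈ H) {j : ι} {μ : H → K} (hμ : μ ≠ 0) {x w : L}
    (hx : x ∈ V j) (hxμ : ∀ t : H, ⁅(t : L), x⁆ = μ t • x) (hx0 : x ≠ 0)
    (hw : w ∈ V j) (hwμ : ∀ t : H, ⁅(t : L), w⁆ = μ t • w) : ∃ c : K, c • x = w := by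
  have := IsKilling.isLieAbelian_of_graded hV hVlie hH hH0
  have mem_rootSpace {z : L} (hz : ∀ t : H, ⁅(t : L), z⁆ = μ t • z) : z ∈ rootSpace H μ :=
    weightSpace_le_genWeightSpace L μ ((mem_weightSpace ..).mpr hz)
  obtain ⟨y, hy, hyμ, hxy⟩ := IsKilling.exists_killingForm_ne_zero_of_graded hV hVlie hH hx
    (mem_rootSpace hxμ) hx0
  have lie_mem {z : L} (hz : z ∈ V j) (hzμ : ∀ t : H, ⁅(t : L), z⁆ = μ t • z) : ⁅z, y⁆ ∈ H := by
    refine hH0 _ (by simpa using hVlie _ _ _ hz _ hy) ?_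
    simpa using lie_mem_genWeightSpace_of_mem_genWeightSpace (mem_rootSpace hzμ) hyμ
  have killing_lie {z : L} (hzμ : ∀ t : H, ⁅(t : L), z⁆ = μ t • z) (t : H) :
      killingForm K L t ⁅z, y⁆ = μ t * killingForm K L z y := by
    rw [← LieModule.traceForm_apply_lie_apply, hzμ]
    simp
  let h : H := ⟨⁅x, y⁆, lie_mem hx hxμ⟩
  have hμh : μ h ≠ 0 := by
    intro h0
    have hx_nil : IsNilpotent (ad K L x) := isNilpotent_ad_of_mem_rootSpace H hμ (mem_rootSpace hxμ)
    have hcomm : Commute (ad K L x) (ad K L ⁅x, y⁆) := by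
      refine commute_ad_of_lie_eq_zero ?_
      rw [← lie_skew, hxμ h, h0, zero_smul, neg_zero]
    have : IsAddTorsionFree (Module.End K L) := .of_isTorsionFree K _
    have h_nil : IsNilpotent (ad K L ⁅x, y⁆) :=
      isNilpotent_commutator_of_commute (x := ad K L x) (y := ad K L y)
        (by ext; simp) hcomm hx_nil
    obtain ⟨t, ht⟩ := Function.ne_iff.mp hμ
    have hth : Commute (ad K L t) (ad K L ⁅x, y⁆) :=
      commute_ad_of_lie_eq_zero (congr_arg Subtype.val (trivial_lie_zero H H t h))
    have htr : killingForm K L t ⁅x, y⁆ = 0 :=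
      (LinearMap.isNilpotent_trace_of_isNilpotent (hth.isNilpotent_mul_left h_nil)).eq_zero
    rw [killing_lie hxμ] at htr
    exact mul_ne_zero ht hxy htr
  let c : K := killingForm K L w y / killingForm K L x y
  let z : L := w - c • x
  have hz : z ∈ V j := sub_mem hw ((V j).smul_mem c hx)
  have hzμ (t : H) : ⁅(t : L), z⁆ = μ t • z := by
    simp only [z, lie_sub, lie_smul, hwμ, hxμ, smul_sub, smul_comm c]
  have hzy0 : killingForm K L z y = 0 := by simp [z, c, hxy]
  have hzy : ⁅z, y⁆ = 0 := by
    by_contra hne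
    obtain ⟨t, ht, ht0, hzt⟩ := IsKilling.exists_killingForm_ne_zero_of_graded hV hVlie hH
      (hH (lie_mem hz hzμ)) (le_zeroRootSubalgebra K L H (lie_mem hz hzμ)) hne
    rw [neg_zero] at ht ht0
    rw [LieModule.traceForm_comm, killing_lie hzμ ⟨t, hH0 t ht ht0⟩, hzy0, mul_zero] at hzt
    exact hzt rfl
  refine ⟨c, (sub_eq_zero.mp ?_).symm⟩
  exact eq_zero_of_lie_eq_zero_of_lie_lie_eq_smul (K := K) (M := L) hμh (hxμ h) (hzμ h)
    (by rw [← lie_skew, hzy, neg_zero])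

end Graded

end LieAlgebra


/-- Let `L` be a finite-dimensional simple complex Lie algebra with a
`ℤ/nℤ`-grading `V`, and let `h0` be a Cartan subalgebra of the grade-zero subalgebra
`g0`.  Fix `j ≠ 0` and let `μ : h0 → ℂ` be a nonzero weight of the `h0`-module `V j`
(via the adjoint action), i.e. `μ ≠ 0` and the weight space
`W = {x ∈ V j | ⁅t, x⁆ = μ t • x for all t ∈ h0}` is nonzero.  Then `dim W = 1`. -/
theorem weight_space_one_dimensional {n : ℕ}
    {L : Type} [LieRing L] [LieAlgebra ℂ L]
    [FiniteDimensional ℂ L] [LieAlgebra.IsSimple ℂ L]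
    (V : ZMod n → Submodule ℂ L)
    (hVinternal : DirectSum.IsInternal V)
    (hVbracket : ∀ i j : ZMod n, ∀ x ∈ V i, ∀ y ∈ V j, ⁅x, y⁆ ∈ V (i + j))
    (g0 : LieSubalgebra ℂ L) (hg0 : g0.toSubmodule = V 0)
    (h0 : LieSubalgebra ℂ ↥g0) (hh0cartan : h0.IsCartanSubalgebra)
    (j : ZMod n) (hj : j ≠ 0)
    (μ : ↥h0 → ℂ) (hμ : μ ≠ 0)
    (W : Submodule ℂ L)
    (hW : ∀ x : L, x ∈ W ↔
      x ∈ V j ∧ ∀ t : ↥h0, ⁅((t : ↥g0) : L), x⁆ = μ t • x)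
    (hWne : W ≠ ⊥) :
    Module.finrank ℂ ↥W = 1 := by
  classical
  let e : h0 ≃ₗ⁅ℂ⁆ h0.map g0.incl := h0.equivMapOfInjective g0.incl Subtype.coe_injective
  have he (t : h0.map g0.incl) : (((e.symm t : h0) : g0) : L) = t := by
    conv_rhs => rw [← e.apply_symm_apply t]
    rfl
  have : LieRing.IsNilpotent (h0.map g0.incl) := e.nilpotent_iff_equiv_nilpotent.mp inferInstance
  have hH : (h0.map g0.incl).toSubmodule ≤ V 0 := by
    rintro - ⟨t, -, rfl⟩
    rw [← hg0]
    exact t.2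
  have hH0 : ∀ x ∈ V 0, x ∈ rootSpace (h0.map g0.incl) 0 → x ∈ h0.map g0.incl := by
    intro x hx hx0
    rw [← hg0] at hx
    refine ⟨⟨x, hx⟩, ?_, rfl⟩
    have : (⟨x, hx⟩ : g0) ∈ zeroRootSubalgebra ℂ g0 h0 := by
      refine (mem_zeroRootSubalgebra ..).mpr fun t ↦ ?_
      obtain ⟨k, hk⟩ := (mem_zeroRootSubalgebra ..).mp hx0 (e t)
      have hpow (k : ℕ) (z : g0) : (((toEnd ℂ h0 g0 t ^ k) z : g0) : L) =
          (toEnd ℂ (h0.map g0.incl) L (e t) ^ k) (z : L) := by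
        induction k with
        | zero => simp
        | succ k ih =>
          rw [pow_succ', pow_succ', Module.End.mul_apply, Module.End.mul_apply, ← ih]
          rfl
      exact ⟨k, Subtype.ext ((hpow k _).trans hk)⟩
    rwa [zeroRootSubalgebra_eq_of_is_cartan] at this
  obtain ⟨x, hxW, hx0⟩ := (Submodule.ne_bot_iff W).mp hWne
  have hμ' : μ ∘ e.symm ≠ 0 := fun h ↦ hμ <| funext fun t ↦ by simpa using congr_fun h (e t)
  have hWμ {w : L} (hw : w ∈ W) (t : h0.map g0.incl) : ⁅(t : L), w⁆ = (μ ∘ e.symm) t • w := by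
    rw [← he]
    exact ((hW w).mp hw).2 (e.symm t)
  refine (finrank_eq_one_iff_of_nonzero' (⟨x, hxW⟩ : W) (by simpa using hx0)).mpr fun w ↦ ?_
  obtain ⟨c, hc⟩ := IsKilling.exists_smul_eq_of_graded hVinternal hVbracket hH hH0 hμ'
    ((hW x).mp hxW).1 (hWμ hxW) hx0 ((hW w).mp w.2).1 (hWμ w.2)
  exact ⟨c, Subtype.ext hc⟩
end

section
/- Let g be a finite-dimensional semisimple Lie algebra over ℂ with Cartan subalgebra H, root system R ⊆ H^*, and a base Δ ⊆ R of simple roots; let Q^+ denote the set of ℕ-linear combinations of elements of Δ. Let M_1, …, M_ℓ and N be finite-dimensional g-modules, let β_j be a weight of M_j (with respect to H) for j = 1, …, ℓ, and let λ be a weight of N with λ − (β_1 + … + β_ℓ) ∈ Q^+. Then there exist weights μ_j of M_j with μ_j − β_j ∈ Q^+ for each j = 1, …, ℓ, such that μ_1 + … + μ_ℓ is a weight of N and λ − (μ_1 + … + μ_ℓ) ∈ Q^+. -/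
open Module LieAlgebra LieAlgebra.IsKilling LieModule

/-- A nonzero `ℕ`-linear combination of roots pairs positively with the coroot of one of the roots
occurring in it. -/
lemma RootPairing.exists_coroot'_pos_of_sum_ne_zero {ι κ K V W : Type*} [Finite ι] [Fintype κ]
    [Field K] [CharZero K] [AddCommGroup V] [Module K V] [AddCommGroup W] [Module K W]
    (P : RootPairing ι K V W) [P.IsCrystallographic] (r : κ → ι) (c : κ → ℕ)
    (hc : ∑ k, (c k : K) • P.root (r k) ≠ 0) :
    ∃ k, c k ≠ 0 ∧ ∃ z : ℤ, 0 < z ∧ P.coroot' (r k) (∑ k, (c k : K) • P.root (r k)) = z := by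
  have := Fintype.ofFinite ι
  set x : P.rootSpan ℤ := ∑ k, c k • P.rootSpanMem ℤ (r k) with hx
  have hxV : (x : V) = ∑ k, (c k : K) • P.root (r k) := by
    simp [hx, Nat.cast_smul_eq_nsmul, RootPairing.rootSpanMem]
  have hx0 : x ≠ 0 := fun h ↦ hc <| by rw [← hxV, h]; rfl
  let B := P.posRootForm ℤ
  have hpos : 0 < B.posForm x x := P.posRootForm_posForm_pos_of_ne_zero ℤ hx0
  have hsum : B.posForm x x = ∑ k, c k * B.posForm x (P.rootSpanMem ℤ (r k)) := by
    conv_lhs => enter [2]; rw [hx]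
    simp only [map_sum, map_nsmul, nsmul_eq_mul]
  obtain ⟨k, -, hk⟩ := Finset.exists_lt_of_sum_lt
    (show ∑ k : κ, (0 : ℤ) < ∑ k, c k * B.posForm x (P.rootSpanMem ℤ (r k)) by
      simpa [← hsum] using hpos)
  refine ⟨k, fun h ↦ by simp [h] at hk, P.coroot'In ℤ (r k) x, ?_, ?_⟩
  · have key : 2 * B.posForm x (P.rootSpanMem ℤ (r k)) = P.coroot'In ℤ (r k) x *
        B.posForm (P.rootSpanMem ℤ (r k)) (P.rootSpanMem ℤ (r k)) := by
      rw [hx]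
      simp only [map_sum, map_nsmul, LinearMap.sum_apply, LinearMap.smul_apply, Finset.mul_sum,
        Finset.sum_mul]
      refine Finset.sum_congr rfl fun j _ ↦ ?_
      have : 2 * B.posForm (P.rootSpanMem ℤ (r j)) (P.rootSpanMem ℤ (r k)) =
          P.coroot'In ℤ (r k) (P.rootSpanMem ℤ (r j)) *
            B.posForm (P.rootSpanMem ℤ (r k)) (P.rootSpanMem ℤ (r k)) := by
        apply FaithfulSMul.algebraMap_injective ℤ K
        rw [map_mul, map_mul, B.algebraMap_posForm, B.algebraMap_posForm,
          P.coroot'In_rootSpanMem_eq_pairingIn, P.algebraMap_pairingIn]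
        simpa using! B.two_mul_apply_root_root (r j) (r k)
      simp only [nsmul_eq_mul]
      linear_combination (c j : ℤ) * this
    have h1 : 0 < B.posForm (P.rootSpanMem ℤ (r k)) (P.rootSpanMem ℤ (r k)) :=
      B.zero_lt_posForm_apply_root (r k)
    have h2 : 0 < B.posForm x (P.rootSpanMem ℤ (r k)) :=
      pos_of_mul_pos_right hk (Nat.cast_nonneg _)
    exact pos_of_mul_pos_left (key ▸ mul_pos two_pos h2) h1.le
  · rw [← hxV]
    simpa using (P.algebraMap_coroot'In_apply ℤ (r k) x).symm

/-- The submonoid of `ℕ`-linear combinations of the elements of a finite set of vectors. -/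
def natCone (K : Type*) {V : Type*} [Semiring K] [AddCommMonoid V] [Module K V]
    (Δ : Finset V) : AddSubmonoid V where
  carrier := {γ | ∃ c : Δ → ℕ, γ = ∑ α : Δ, (c α : K) • (α : V)}
  zero_mem' := ⟨0, by simp⟩
  add_mem' := by
    rintro _ _ ⟨c, rfl⟩ ⟨d, rfl⟩
    exact ⟨c + d, by simp [add_smul, Finset.sum_add_distrib]⟩

lemma mem_natCone {K V : Type*} [Semiring K] [AddCommMonoid V] [Module K V] {Δ : Finset V} {γ : V} :
    γ ∈ natCone K Δ ↔ ∃ c : Δ → ℕ, γ = ∑ α : Δ, (c α : K) • (α : V) := Iff.rfl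

lemma subset_natCone {K V : Type*} [Semiring K] [AddCommMonoid V] [Module K V] {Δ : Finset V}
    {α : V} (hα : α ∈ Δ) : α ∈ natCone K Δ := by
  classical
  exact ⟨Pi.single ⟨α, hα⟩ 1, by simp [Pi.single_apply]⟩

section Weights

variable {K L : Type*} [Field K] [LieRing L] [LieAlgebra K L]

/-- `χ` is a weight of `M` in the strict sense: it has a simultaneous eigenvector. -/
def HasWeight (H : LieSubalgebra K L) (M : Type*) [AddCommGroup M] [Module K M]
    [LieRingModule L M] (χ : Dual K H) : Prop :=
  ∃ v : M, v ≠ 0 ∧ ∀ t : H, ⁅(t : L), v⁆ = χ t • v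

lemma HasWeight.exists_weight {H : LieSubalgebra K L}
    [H.IsCartanSubalgebra] {α : Dual K H} (hα : HasWeight H L α) :
    ∃ w : Weight K H L, (w : H → K) = α := by
  obtain ⟨v, hv, h⟩ := hα
  refine ⟨⟨α, fun hbot ↦ hv ?_⟩, rfl⟩
  have : v ∈ weightSpace L α := (mem_weightSpace ..).2 h
  simpa [hbot] using weightSpace_le_genWeightSpace L (α : H → K) this

variable [CharZero K] [FiniteDimensional K L] [IsKilling K L]
  {H : LieSubalgebra K L} [H.IsCartanSubalgebra] [IsTriangularizable K H L]
  {M : Type*} [AddCommGroup M] [Module K M] [LieRingModule L M] [LieModule K L M]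

lemma lie_lie_eq_smul_of_mem_rootSpace {χ α : Dual K H} {v : M} {e : L}
    (hv : ∀ t : H, ⁅(t : L), v⁆ = χ t • v) (he : e ∈ rootSpace H α) (t : H) :
    ⁅(t : L), ⁅e, v⁆⁆ = (χ + α) t • ⁅e, v⁆ := by
  have : ⁅(t : L), e⁆ = α t • e := lie_eq_smul_of_mem_rootSpace he t
  rw [leibniz_lie, this, hv, smul_lie, lie_smul, LinearMap.add_apply, add_smul, add_comm]

variable [FiniteDimensional K M]

lemma HasWeight.add_or_exists_nat {χ : Dual K H} (hχ : HasWeight H M χ) {α : Weight K H L}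
    (hα : α.IsNonZero) :
    HasWeight H M (χ + α.toLinear) ∨ ∃ n : ℕ, χ (coroot α) = n := by
  obtain ⟨v, hv0, hv⟩ := hχ
  obtain ⟨h, e, f, ht, he, hf⟩ := exists_isSl2Triple_of_weight_isNonZero hα
  by_cases hev : ⁅e, v⁆ = 0
  · have P : IsSl2Triple.HasPrimitiveVectorWith ht v (χ (coroot α)) :=
      ⟨hv0, by rw [IsSl2Triple.h_eq_coroot hα ht he hf, hv], hev⟩
    exact .inr P.exists_nat
  · exact .inl ⟨⁅e, v⁆, hev, lie_lie_eq_smul_of_mem_rootSpace hv he⟩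

lemma HasWeight.sub_or_exists_nat {χ : Dual K H} (hχ : HasWeight H M χ) {α : Weight K H L}
    (hα : α.IsNonZero) :
    HasWeight H M (χ - α.toLinear) ∨ ∃ n : ℕ, χ (coroot α) = -n := by
  have hα' : (-α).IsNonZero := by simpa using hα
  refine (hχ.add_or_exists_nat hα').imp (fun h ↦ ?_) fun ⟨n, hn⟩ ↦ ⟨n, ?_⟩
  · simpa [sub_eq_add_neg] using h
  · simpa [neg_eq_iff_eq_neg] using hn

/-- If `χ` is a weight of `N` lying above a sum of weights `β p` of the modules `M p`, then the
`β p` can be raised to weights of the `M p` whose sum is a weight of `N` lying below `χ`. -/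
lemma exists_hasWeight_sum_of_sub_mem_natCone {Δ : Finset (Dual K H)}
    (hΔ : ∀ α ∈ Δ, α ≠ 0 ∧ HasWeight H L α) {ι : Type*} [Fintype ι] {M : ι → Type*}
    [∀ p, AddCommGroup (M p)] [∀ p, Module K (M p)] [∀ p, LieRingModule L (M p)]
    [∀ p, LieModule K L (M p)] [∀ p, FiniteDimensional K (M p)]
    {N : Type*} [AddCommGroup N] [Module K N] [LieRingModule L N] [LieModule K L N]
    [FiniteDimensional K N] {β : ι → Dual K H} (hβ : ∀ p, HasWeight H (M p) (β p))
    {χ : Dual K H} (hχ : HasWeight H N χ) (hdiff : χ - ∑ p, β p ∈ natCone K Δ) :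
    ∃ μ : ι → Dual K H, (∀ p, HasWeight H (M p) (μ p) ∧ μ p - β p ∈ natCone K Δ) ∧
      HasWeight H N (∑ p, μ p) ∧ χ - ∑ p, μ p ∈ natCone K Δ := by
  classical
  obtain ⟨c, hc⟩ := mem_natCone.1 hdiff
  induction hn : ∑ α, c α generalizing β χ c with
  | zero =>
    have : χ = ∑ p, β p := by
      rw [← sub_eq_zero, hc]
      exact Finset.sum_eq_zero fun α _ ↦ by simp_all
    exact ⟨β, fun p ↦ ⟨hβ p, by simp⟩, this ▸ hχ, by simp [this]⟩
  | succ n ih =>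
    by_cases h0 : χ - ∑ p, β p = 0
    · have : χ = ∑ p, β p := sub_eq_zero.1 h0
      exact ⟨β, fun p ↦ ⟨hβ p, by simp⟩, this ▸ hχ, by simp [this]⟩
    have hw (α : Δ) : ∃ w : H.root, (w : Weight K H L).toLinear = α := by
      obtain ⟨w, hw⟩ := (hΔ α α.2).2.exists_weight
      refine ⟨⟨w, ?_⟩, DFunLike.coe_injective hw⟩
      simp only [Finset.mem_filter, Finset.mem_univ, true_and, Weight.IsNonZero, Weight.IsZero, hw]
      exact fun h ↦ (hΔ α α.2).1 (DFunLike.coe_injective h)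
    choose r hr using hw
    have hroot (α : Δ) : (rootSystem H).root (r α) = α := hr α
    have hne : ∑ α, (c α : K) • (rootSystem H).root (r α) ≠ 0 := by
      simpa only [hroot, ← hc] using h0
    obtain ⟨α, hcα, z, hz, hαz⟩ :=
      (rootSystem H).exists_coroot'_pos_of_sum_ne_zero r c hne
    simp only [hroot, ← hc] at hαz
    replace hαz : (χ - ∑ p, β p) (coroot (r α : Weight K H L)) = z := hαz
    have hα : (r α : Weight K H L).IsNonZero := H.isNonZero_coe_root (r α)
    obtain ⟨d, rfl⟩ : ∃ d, c = d + Pi.single α 1 := by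
      refine ⟨c - Pi.single α 1, (tsub_add_cancel_of_le fun i ↦ ?_).symm⟩
      obtain rfl | h := eq_or_ne i α
      · simpa using Nat.one_le_iff_ne_zero.2 hcα
      · simp [h]
    have hd : ∑ i, d i = n := by simpa [Finset.sum_add_distrib] using hn
    have hc' : χ - ∑ p, β p = ∑ i : Δ, (d i : K) • (i : Dual K H) + α := by
      simpa [add_smul, Finset.sum_add_distrib, Pi.single_apply] using hc
    have hαΔ : (α : Dual K H) ∈ natCone K Δ := subset_natCone α.2
    obtain hsub | ⟨m, hm⟩ := hχ.sub_or_exists_nat hα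
    · rw [hr] at hsub
      have hdiff' : χ - α - ∑ p, β p = ∑ i : Δ, (d i : K) • (i : Dual K H) := by
        rw [sub_right_comm, hc', add_sub_cancel_right]
      obtain ⟨μ, hμ, hμN, hle⟩ := ih hβ hsub ⟨d, hdiff'⟩ d hdiff' hd
      refine ⟨μ, hμ, hμN, ?_⟩
      have : χ - ∑ p, μ p = (χ - α - ∑ p, μ p) + α := by abel
      exact this ▸ add_mem hle hαΔ
    obtain ⟨p, hp⟩ : ∃ p, HasWeight H (M p) (β p + α) := by
      by_contra! hcon
      have (p : ι) : ∃ k : ℕ, β p (coroot (r α : Weight K H L)) = k :=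
        ((hβ p).add_or_exists_nat hα).resolve_left (by rw [hr]; exact hcon p)
      choose k hk using this
      simp only [LinearMap.sub_apply, LinearMap.sum_apply, hm, hk] at hαz
      have : (-(m : ℤ) - ∑ p, (k p : ℤ)) = z := by exact_mod_cast hαz
      have : 0 ≤ ∑ p, (k p : ℤ) := by positivity
      lia
    let δ : ι → Dual K H := Pi.single p α
    have hβ' (q : ι) : HasWeight H (M q) ((β + δ) q) := by
      obtain rfl | h := eq_or_ne q p
      · simpa [δ] using hp
      · simpa [δ, h] using hβ q
    have hdiff' : χ - ∑ q, (β + δ) q = ∑ i : Δ, (d i : K) • (i : Dual K H) := by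
      have hδ : ∑ q, δ q = α := by simp [δ]
      simp only [Pi.add_apply, Finset.sum_add_distrib]
      rw [hδ, ← sub_sub, hc', add_sub_cancel_right]
    obtain ⟨μ, hμ, hμN, hle⟩ := ih hβ' hχ ⟨d, hdiff'⟩ d hdiff' hd
    refine ⟨μ, fun q ↦ ⟨(hμ q).1, ?_⟩, hμN, hle⟩
    have hδ : δ q ∈ natCone K Δ := by
      obtain rfl | h := eq_or_ne q p
      · simpa [δ] using hαΔ
      · simp [δ, h]
    have : μ q - β q = (μ q - (β + δ) q) + δ q := by
      rw [Pi.add_apply]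
      abel
    exact this ▸ add_mem (hμ q).2 hδ

end Weights

/-- Let `L` be a finite-dimensional semisimple complex Lie algebra with
Cartan subalgebra `H`, root system the set of nonzero weights of the adjoint module,
and a base `Δ` of simple roots (a linearly independent set of roots such that every
root is an `ℕ`-linear or `(-ℕ)`-linear combination of elements of `Δ`); `Q⁺` is the set
of `ℕ`-linear combinations of elements of `Δ`.  Let `M 0, …, M (ℓ-1)` and `N` be
finite-dimensional `L`-modules, `β p` a weight of `M p` for each `p`, and `λ` a weight
of `N` with `λ - ∑ β p ∈ Q⁺`.  Then there are weights `μ p` of `M p` with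
`μ p - β p ∈ Q⁺` such that `∑ μ p` is a weight of `N` and `λ - ∑ μ p ∈ Q⁺`. -/
theorem weight_raising {L : Type} [LieRing L] [LieAlgebra ℂ L]
    [FiniteDimensional ℂ L] [LieAlgebra.IsSemisimple ℂ L]
    (H : LieSubalgebra ℂ L) (hH : H.IsCartanSubalgebra)
    -- `Δ` is a base of simple roots
    (Δ : Finset (Module.Dual ℂ ↥H))
    (hΔind : LinearIndependent ℂ (fun α : ↥Δ => (α : Module.Dual ℂ ↥H)))
    (hΔroot : ∀ α ∈ Δ, α ≠ 0 ∧ ∃ v : L, v ≠ 0 ∧ ∀ t : ↥H, ⁅(t : L), v⁆ = α t • v)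
    (hΔbase : ∀ β : Module.Dual ℂ ↥H, β ≠ 0 →
      (∃ v : L, v ≠ 0 ∧ ∀ t : ↥H, ⁅(t : L), v⁆ = β t • v) →
      (∃ c : ↥Δ → ℕ, β = ∑ α : ↥Δ, (c α : ℂ) • (α : Module.Dual ℂ ↥H)) ∨
      (∃ c : ↥Δ → ℕ, β = -∑ α : ↥Δ, (c α : ℂ) • (α : Module.Dual ℂ ↥H)))
    -- the modules and their weights
    (ℓ : ℕ) (M : Fin ℓ → Type)
    [∀ p, AddCommGroup (M p)] [∀ p, Module ℂ (M p)]
    [∀ p, LieRingModule L (M p)] [∀ p, LieModule ℂ L (M p)]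
    [∀ p, FiniteDimensional ℂ (M p)]
    (N : Type) [AddCommGroup N] [Module ℂ N]
    [LieRingModule L N] [LieModule ℂ L N] [FiniteDimensional ℂ N]
    (β : Fin ℓ → Module.Dual ℂ ↥H)
    (hβ : ∀ p : Fin ℓ, ∃ v : M p, v ≠ 0 ∧ ∀ t : ↥H, ⁅(t : L), v⁆ = β p t • v)
    (lam : Module.Dual ℂ ↥H)
    (hlam : ∃ v : N, v ≠ 0 ∧ ∀ t : ↥H, ⁅(t : L), v⁆ = lam t • v)
    (hdiff : ∃ c : ↥Δ → ℕ,
      lam - ∑ p, β p = ∑ α : ↥Δ, (c α : ℂ) • (α : Module.Dual ℂ ↥H)) :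
    ∃ μ : Fin ℓ → Module.Dual ℂ ↥H,
      (∀ p : Fin ℓ,
        (∃ v : M p, v ≠ 0 ∧ ∀ t : ↥H, ⁅(t : L), v⁆ = μ p t • v) ∧
        ∃ c : ↥Δ → ℕ,
          μ p - β p = ∑ α : ↥Δ, (c α : ℂ) • (α : Module.Dual ℂ ↥H)) ∧
      (∃ v : N, v ≠ 0 ∧ ∀ t : ↥H, ⁅(t : L), v⁆ = (∑ p, μ p) t • v) ∧
      ∃ c : ↥Δ → ℕ,
        lam - ∑ p, μ p = ∑ α : ↥Δ, (c α : ℂ) • (α : Module.Dual ℂ ↥H) := by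
  have : HasTrivialRadical ℂ L := inferInstance
  exact exists_hasWeight_sum_of_sub_mem_natCone hΔroot hβ hlam hdiff
end

section
/- Let g be a finite-dimensional simple Lie algebra over ℂ with a ℤ/nℤ-grading g = ⊕_{i ∈ ℤ/nℤ} g_i, and let h_0 be a Cartan subalgebra of the grade-zero subalgebra g_0. Then the restriction to h_0 of the Killing form of g is nondegenerate. -/
/-- In an algebra with an internal grading compatible with the bracket, homogeneous components
whose degrees do not sum to zero are orthogonal for the Killing form. -/
theorem killingForm_eq_zero_of_add_ne_zero {K L ι : Type*} [Field K] [LieRing L] [LieAlgebra K L]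
    [FiniteDimensional K L] [AddCommGroup ι] [DecidableEq ι] {V : ι → Submodule K L}
    (hV : DirectSum.IsInternal V)
    (hbr : ∀ i j : ι, ∀ x ∈ V i, ∀ y ∈ V j, ⁅x, y⁆ ∈ V (i + j))
    {i j : ι} (hij : i + j ≠ 0) {x y : L} (hx : x ∈ V i) (hy : y ∈ V j) :
    killingForm K L x y = 0 := by
  rw [killingForm_apply_apply]
  refine LinearMap.trace_eq_zero_of_mapsTo_ne hV (fun k ↦ i + (j + k)) (fun k hk ↦ hij ?_)
    fun k z hz ↦ hbr _ _ _ hx _ (hbr _ _ _ hy _ hz)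
  rwa [← add_assoc, add_eq_right] at hk

/-- Let `L` be a finite-dimensional simple complex Lie algebra with a
`ℤ/nℤ`-grading `V`, and let `h0` be a Cartan subalgebra of the grade-zero subalgebra
`g0`.  Then the restriction to `h0` of the Killing form of `L` is nondegenerate. -/
theorem killing_restricted_to_h0_nondegenerate {n : ℕ}
    {L : Type} [LieRing L] [LieAlgebra ℂ L]
    [FiniteDimensional ℂ L] [LieAlgebra.IsSimple ℂ L]
    (V : ZMod n → Submodule ℂ L)
    (hVinternal : DirectSum.IsInternal V)
    (hVbracket : ∀ i j : ZMod n, ∀ x ∈ V i, ∀ y ∈ V j, ⁅x, y⁆ ∈ V (i + j))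
    (g0 : LieSubalgebra ℂ L) (hg0 : g0.toSubmodule = V 0)
    (h0 : LieSubalgebra ℂ ↥g0) (hh0cartan : h0.IsCartanSubalgebra) :
    ∀ x : ↥g0, x ∈ h0 →
      (∀ y : ↥g0, y ∈ h0 → killingForm ℂ L (x : L) (y : L) = 0) →
      (x : L) = 0 := by
  intro x hx hxy
  have h_mem (z : g0) : (z : L) ∈ V 0 := by rw [← hg0]; exact z.2
  -- `x` is orthogonal to all of `g0`, by the Fitting decomposition of `g0` under `h0`.
  have h_g0 (y : g0) : killingForm ℂ L (x : L) (y : L) = 0 := by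
    have h_top : y ∈ LieAlgebra.rootSpace h0 (0 : h0 → ℂ) ⊔
        LieModule.posFittingComp ℂ h0 g0 := by
      rw [(LieModule.isCompl_genWeightSpace_zero_posFittingComp ℂ h0 g0).sup_eq_top]
      exact LieSubmodule.mem_top y
    obtain ⟨a, ha, b, hb, rfl⟩ := (LieSubmodule.mem_sup _ _ y).mp h_top
    have hb' : LieModule.traceForm ℂ g0 L x b = 0 :=
      LieModule.eq_zero_of_mem_genWeightSpace_mem_posFitting ℂ h0 g0
        (fun u v w ↦ LieModule.traceForm_apply_lie_apply' ℂ g0 L u v w)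
        (LieAlgebra.toLieSubmodule_le_rootSpace_zero ℂ g0 h0 hx) hb
    rw [LieAlgebra.rootSpace_zero_eq] at ha
    rw [AddMemClass.coe_add, map_add, hxy a ha, zero_add]
    exact hb'
  -- Components of nonzero degree are orthogonal to `x` as well.
  refine (LieAlgebra.IsKilling.killingForm_nondegenerate ℂ L).1 _ fun z ↦ ?_
  have hz : z ∈ ⨆ i, V i := by
    rw [hVinternal.submodule_iSup_eq_top]
    exact Submodule.mem_top
  induction hz using Submodule.iSup_induction' with
  | mem i z hz =>
    obtain rfl | hi := eq_or_ne i 0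
    · exact h_g0 ⟨z, by rw [← LieSubalgebra.mem_toSubmodule, hg0]; exact hz⟩
    · exact killingForm_eq_zero_of_add_ne_zero hVinternal hVbracket (by simpa using hi)
        (h_mem x) hz
  | zero => simp
  | add u v _ _ hu hv => rw [map_add, hu, hv, add_zero]
end
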